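/- Fix integers k, m ≥ 1 and let e₁ = k/(k+m) − √(km(3k+3m−1))/((k+m)(3k+3m−1)) and e₂ = k/(k+m) + √(km(3k+3m−1))/((k+m)(3k+3m−1)) be the two extraneous fixed points of C. Then C′(e₁) > 1 and C′(e₂) > 1; i.e. both extraneous fixed points are repelling. -/

import Mathlib

/-!
An extraneous fixed point of `C` is a root `e` of `E`, so only the term carrying `E'(e)` survives
in the derivative of the correction `x (x - 1) E(x) / (2 d(x)³)`, where `d(x) = (k + m) x - k`.
Since `E'(x) = 2 (3k + 3m - 1) d(x)`, this gives `C'(e) = 1 + e (1 - e) (3k + 3m - 1) / d(e)²`,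
and it remains to see that `0 < e < 1`. The coefficients of `E` alternate in sign, so its real roots
are positive; exchanging `k` with `m` and `x` with `1 - x` preserves `E`, so they are also less
than `1`.
-/

open Topology

/-- The quadratic `E` for the exponents `k` and `m`, whose roots are the extraneous fixed points
of Chebyshev's method for `z ^ k * (z - 1) ^ m`. -/
def extraneousQuadratic {R : Type*} [CommRing R] (k m x : R) : R :=
  (k + m) * (3 * k + 3 * m - 1) * x ^ 2 - 2 * k * (3 * k + 3 * m - 1) * x + (3 * k ^ 2 - k)

/-- Chebyshev's method for `z ^ k * (z - 1) ^ m`, as a rational function; it takes a junk value at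
the pole `k / (k + m)`. -/
def chebyshevMap {K : Type*} [Field K] (k m x : K) : K :=
  x - x * (x - 1) * extraneousQuadratic k m x / (2 * ((k + m) * x - k) ^ 3)

section Algebra

variable {R : Type*} [CommRing R]

theorem extraneousQuadratic_one_sub (k m x : R) :
    extraneousQuadratic m k (1 - x) = extraneousQuadratic k m x := by
  unfold extraneousQuadratic
  ring

theorem add_mul_extraneousQuadratic (k m x : R) :
    (k + m) * extraneousQuadratic k m x
      = (3 * k + 3 * m - 1) * ((k + m) * x - k) ^ 2 - k * m := by
  unfold extraneousQuadratic
  ring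

theorem add_mul_sub_ne_zero_of_extraneousQuadratic_eq_zero {k m x : R} (hkm : k * m ≠ 0)
    (hx : extraneousQuadratic k m x = 0) : (k + m) * x - k ≠ 0 := by
  intro hd
  have h := add_mul_extraneousQuadratic k m x
  rw [hx, hd] at h
  exact hkm (by linear_combination h)

theorem extraneousQuadratic_div_add_div_eq_zero {K : Type*} [Field K] {k m s : K}
    (hn : k + m ≠ 0) (ht : 3 * k + 3 * m - 1 ≠ 0) (hs : s ^ 2 = k * m * (3 * k + 3 * m - 1)) :
    extraneousQuadratic k m (k / (k + m) + s / ((k + m) * (3 * k + 3 * m - 1))) = 0 := by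
  refine (mul_eq_zero_iff_left hn).mp ?_
  have hd : (k + m) * (k / (k + m) + s / ((k + m) * (3 * k + 3 * m - 1))) - k
      = s / (3 * k + 3 * m - 1) := by
    field_simp
    ring
  rw [add_mul_extraneousQuadratic, hd, div_pow, hs, sub_eq_zero, mul_div_assoc',
    div_eq_iff (pow_ne_zero 2 ht)]
  ring

end Algebra

section Order

variable {K : Type*} [Field K] [LinearOrder K] [IsStrictOrderedRing K] {k m x : K}

theorem extraneousQuadratic_pos_of_nonpos (hk : 1 / 3 < k) (hm : 0 < m) (hx : x ≤ 0) :
    0 < extraneousQuadratic k m x := by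
  have hk₀ : 0 < k := by linarith
  have ht : 0 < 3 * k + 3 * m - 1 := by linarith
  have hquad : 0 ≤ (k + m) * (3 * k + 3 * m - 1) * x ^ 2 := by positivity
  have hlin : 2 * k * (3 * k + 3 * m - 1) * x ≤ 0 :=
    mul_nonpos_of_nonneg_of_nonpos (by positivity) hx
  have hconst : 0 < k * (3 * k - 1) := mul_pos hk₀ (by linarith)
  unfold extraneousQuadratic
  linarith

theorem pos_of_extraneousQuadratic_eq_zero (hk : 1 / 3 < k) (hm : 0 < m)
    (hx : extraneousQuadratic k m x = 0) : 0 < x := by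
  by_contra! hx₀
  exact (extraneousQuadratic_pos_of_nonpos hk hm hx₀).ne' hx

theorem lt_one_of_extraneousQuadratic_eq_zero (hk : 0 < k) (hm : 1 / 3 < m)
    (hx : extraneousQuadratic k m x = 0) : x < 1 :=
  sub_pos.mp <| pos_of_extraneousQuadratic_eq_zero hm hk <|
    (extraneousQuadratic_one_sub k m x).trans hx

end Order

section Deriv

variable {𝕜 : Type*} [NontriviallyNormedField 𝕜]

theorem hasDerivAt_mul_of_eq_zero {f g : 𝕜 → 𝕜} {f' x : 𝕜} (hf : HasDerivAt f f' x)
    (hg : ContinuousAt g x) (hx : f x = 0) : HasDerivAt (fun y ↦ f y * g y) (f' * g x) x := by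
  rw [hasDerivAt_iff_tendsto_slope] at hf ⊢
  refine (hf.mul (hg.tendsto.mono_left nhdsWithin_le_nhds)).congr fun y ↦ ?_
  simp only [slope_def_field, hx]
  ring

theorem hasDerivAt_extraneousQuadratic (k m x : 𝕜) :
    HasDerivAt (extraneousQuadratic k m) (2 * (3 * k + 3 * m - 1) * ((k + m) * x - k)) x := by
  have h := ((((hasDerivAt_id' x).fun_pow 2).const_mul ((k + m) * (3 * k + 3 * m - 1))).fun_sub
    ((hasDerivAt_id' x).const_mul (2 * k * (3 * k + 3 * m - 1)))).add_const (3 * k ^ 2 - k)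
  refine h.congr_deriv ?_
  push_cast
  ring

theorem hasDerivAt_chebyshevMap_of_extraneousQuadratic_eq_zero [NeZero (2 : 𝕜)] {k m x : 𝕜}
    (hkm : k * m ≠ 0) (hx : extraneousQuadratic k m x = 0) :
    HasDerivAt (chebyshevMap k m)
      (1 + x * (1 - x) * (3 * k + 3 * m - 1) / ((k + m) * x - k) ^ 2) x := by
  have hd := add_mul_sub_ne_zero_of_extraneousQuadratic_eq_zero hkm hx
  have hfactor : ContinuousAt (fun y ↦ y * (y - 1) / (2 * ((k + m) * y - k) ^ 3)) x :=
    ContinuousAt.div (by fun_prop) (by fun_prop) (mul_ne_zero two_ne_zero (pow_ne_zero 3 hd))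
  have hcorrection := hasDerivAt_mul_of_eq_zero (hasDerivAt_extraneousQuadratic k m x) hfactor hx
  have hmap : chebyshevMap k m = fun y ↦
      y - extraneousQuadratic k m y * (y * (y - 1) / (2 * ((k + m) * y - k) ^ 3)) := by
    ext y
    unfold chebyshevMap
    ring
  rw [hmap]
  refine ((hasDerivAt_id' x).fun_sub hcorrection).congr_deriv ?_
  field_simp
  ring

end Deriv

theorem one_lt_deriv_chebyshevMap {k m x : ℝ} (hk : 1 / 3 < k) (hm : 1 / 3 < m)
    (hx : extraneousQuadratic k m x = 0) : 1 < deriv (chebyshevMap k m) x := by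
  have hk₀ : 0 < k := by linarith
  have hm₀ : 0 < m := by linarith
  have hkm : k * m ≠ 0 := by positivity
  rw [(hasDerivAt_chebyshevMap_of_extraneousQuadratic_eq_zero hkm hx).deriv]
  have hx₀ : 0 < x := pos_of_extraneousQuadratic_eq_zero hk hm₀ hx
  have hx₁ : 0 < 1 - x := sub_pos.mpr (lt_one_of_extraneousQuadratic_eq_zero hk₀ hm hx)
  have ht : 0 < 3 * k + 3 * m - 1 := by linarith
  have hd := add_mul_sub_ne_zero_of_extraneousQuadratic_eq_zero hkm hx
  exact lt_add_of_pos_right 1 (by positivity)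

/-- The bound `1 / 3` is sharp: for `k = 1 / 3` the point `0` is a root of `E` with
multiplier `1`. -/
theorem extraneous_fixed_points_repelling_general {k m : ℝ} (hk : 1 / 3 < k) (hm : 1 / 3 < m)
    {C : ℝ → ℝ} (hC : ∀ x, x ≠ k / (k + m) → C x = chebyshevMap k m x) {e₁ e₂ : ℝ}
    (he₁ : e₁ = k / (k + m)
      - √(k * m * (3 * k + 3 * m - 1)) / ((k + m) * (3 * k + 3 * m - 1)))
    (he₂ : e₂ = k / (k + m)
      + √(k * m * (3 * k + 3 * m - 1)) / ((k + m) * (3 * k + 3 * m - 1))) :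
    1 < deriv C e₁ ∧ 1 < deriv C e₂ := by
  have hk₀ : 0 < k := by linarith
  have hm₀ : 0 < m := by linarith
  have hn : 0 < k + m := add_pos hk₀ hm₀
  have ht : 0 < 3 * k + 3 * m - 1 := by linarith
  have hsqrt : √(k * m * (3 * k + 3 * m - 1)) ^ 2 = k * m * (3 * k + 3 * m - 1) :=
    Real.sq_sqrt (by positivity)
  have repelling {e : ℝ} (he : extraneousQuadratic k m e = 0) : 1 < deriv C e := by
    have hpole : e ≠ k / (k + m) := fun h ↦
      add_mul_sub_ne_zero_of_extraneousQuadratic_eq_zero (by positivity) he <| by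
        rw [h, mul_div_cancel₀ _ hn.ne', sub_self]
    have hCe : C =ᶠ[𝓝 e] chebyshevMap k m := (eventually_ne_nhds hpole).mono hC
    rw [hCe.deriv_eq]
    exact one_lt_deriv_chebyshevMap hk hm he
  constructor
  · rw [he₁, sub_eq_add_neg, ← neg_div]
    exact repelling (extraneousQuadratic_div_add_div_eq_zero hn.ne' ht.ne' (by rwa [neg_sq]))
  · rw [he₂]
    exact repelling (extraneousQuadratic_div_add_div_eq_zero hn.ne' ht.ne' hsqrt)

/-- For `k, m ≥ 1`, both extraneous fixed points `e₁`, `e₂` of the Chebyshev map `C` for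
`z^k(z-1)^m` are repelling: `C'(e₁) > 1` and `C'(e₂) > 1`. -/
theorem extraneous_fixed_points_repelling (k m : ℕ) (hk : 1 ≤ k) (hm : 1 ≤ m)
    (C : ℝ → ℝ)
    (hC : ∀ x : ℝ, x ≠ (k : ℝ) / ((k : ℝ) + m) →
      C x = x - x * (x - 1) *
        (((k : ℝ) + m) * (3 * k + 3 * m - 1) * x ^ 2 - 2 * k * (3 * k + 3 * m - 1) * x
          + (3 * (k : ℝ) ^ 2 - k)) / (2 * (((k : ℝ) + m) * x - k) ^ 3))
    (e₁ e₂ : ℝ)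
    (he₁ : e₁ = (k : ℝ) / ((k : ℝ) + m)
      - Real.sqrt ((k : ℝ) * m * (3 * k + 3 * m - 1)) / (((k : ℝ) + m) * (3 * k + 3 * m - 1)))
    (he₂ : e₂ = (k : ℝ) / ((k : ℝ) + m)
      + Real.sqrt ((k : ℝ) * m * (3 * k + 3 * m - 1)) / (((k : ℝ) + m) * (3 * k + 3 * m - 1))) :
    1 < deriv C e₁ ∧ 1 < deriv C e₂ := by
  have one_third_lt {n : ℕ} (hn : 1 ≤ n) : (1 / 3 : ℝ) < n :=
    lt_of_lt_of_le (by norm_num) (Nat.one_le_cast.mpr hn)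
  exact extraneous_fixed_points_repelling_general (one_third_lt hk) (one_third_lt hm) hC he₁ he₂
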